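/- Let ν = (ν_1,…,ν_t) be a composition of n, let λ be the conjugate (transpose) partition of the weakly decreasing rearrangement of ν, and let 1 ≤ s ≤ n−1. Let (i_1,j_1),…,(i_s,j_s) be pairs in {1,…,n}² such that i_1,…,i_s are pairwise distinct, j_1,…,j_s are pairwise distinct, and for each l either i_l = j_l, or i_l < j_l and block(i_l) ≠ block(j_l). Then the number of indices l with i_l ≠ j_l is at most d_{λ,s}. -/

import Mathlib

/-!
View the pairs as a partial injection on the `n` positions. Write `k` for the number of
nondiagonal pairs and `D` for the set of the `s - k` diagonal positions.

The key point is that each block contains at most `n - s` positions outside `D`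
(`card_block_sdiff_add_le`): a nondiagonal pair never has both entries in the block, so for each
pair one can choose one of its entries that is either diagonal or outside the block, in such
a way that the `s` chosen positions are distinct. Since a block has `ν u` positions, summing over
the blocks gives `n - (s - k) ≤ ∑ u, min (ν u) (n - s)`. The right-hand side is
`λ_1 + ⋯ + λ_{n-s}` (`sum_conjOf`), i.e. `n - ∑_{j > n - s} λ_j`, which rearranges to
`k ≤ d_{λ,s}`.
-/

/-- `d_{λ,i} = i - ∑_{j = n - i + 1}^{n} λ_j` (with `0`-indexed parts `λ_j = l (j-1)`). -/
def dPart (n : ℕ) (l : ℕ → ℕ) (i : ℕ) : ℕ :=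
  i - ∑ j ∈ Finset.Ico (n - i) n, l j

/-- Positions `0, …, n-1` are grouped into consecutive blocks of sizes `ν 0, …, ν (t-1)`.
`SameBlock ν t r c` means positions `r` and `c` lie in the same block. -/
def SameBlock (ν : ℕ → ℕ) (t : ℕ) (r c : ℕ) : Prop :=
  ∃ u < t, (∑ w ∈ Finset.range u, ν w) ≤ r ∧ r < (∑ w ∈ Finset.range (u + 1), ν w) ∧
    (∑ w ∈ Finset.range u, ν w) ≤ c ∧ c < (∑ w ∈ Finset.range (u + 1), ν w)

/-- The conjugate (transpose) partition of the weakly decreasing rearrangement of the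
composition `(ν 0, …, ν (t-1))`: its `0`-indexed `j`-th part is `#{u < t | ν u ≥ j + 1}`. -/
def conjOf (ν : ℕ → ℕ) (t : ℕ) : ℕ → ℕ :=
  fun j => ((Finset.range t).filter (fun u => j + 1 ≤ ν u)).card

/-- The first `m` parts of the conjugate partition count the boxes of the Young diagram of `ν`
lying in the first `m` columns. -/
lemma sum_conjOf (ν : ℕ → ℕ) (t m : ℕ) :
    ∑ j ∈ Finset.range m, conjOf ν t j = ∑ u ∈ Finset.range t, min (ν u) m := by
  simp only [conjOf, Finset.card_filter]
  rw [Finset.sum_comm]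
  refine Finset.sum_congr rfl fun u _ => ?_
  rw [← Finset.card_filter]
  have : (Finset.range m).filter (fun j => j + 1 ≤ ν u) = Finset.range (min (ν u) m) := by
    ext j
    simp only [Finset.mem_filter, Finset.mem_range]
    omega
  rw [this, Finset.card_range]

lemma card_filter_lt_eq_sum_blocks (ν : ℕ → ℕ) (S : Finset ℕ) (t : ℕ) :
    (S.filter (· < ∑ w ∈ Finset.range t, ν w)).card =
      ∑ u ∈ Finset.range t, (S.filter (fun x => (∑ w ∈ Finset.range u, ν w) ≤ x ∧
        x < ∑ w ∈ Finset.range (u + 1), ν w)).card := by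
  induction t with
  | zero => simp
  | succ t ih =>
    rw [Finset.sum_range_succ (n := t) (fun u => (S.filter (fun x =>
      (∑ w ∈ Finset.range u, ν w) ≤ x ∧ x < ∑ w ∈ Finset.range (u + 1), ν w)).card), ← ih, ← Finset.card_union_of_disjoint]
    · congr 1
      ext x
      have := Finset.sum_range_succ ν t
      simp only [Finset.mem_filter, Finset.mem_union]
      grind
    · rw [Finset.disjoint_filter]
      intro x _ h1 h2
      omega

/-- If no nondiagonal pair lies inside the interval `[p, q)`, then at most `n - s` positions of
`[p, q)` are not diagonal. -/
lemma card_block_sdiff_add_le {n s p q : ℕ} (hq : q ≤ n) (a b : Fin s → ℕ)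
    (han : ∀ l, a l < n) (hbn : ∀ l, b l < n)
    (hainj : Function.Injective a) (hbinj : Function.Injective b) (hab : ∀ l, a l ≤ b l)
    (hblock : ∀ l, p ≤ a l → b l < q → a l = b l) (S : Finset ℕ)
    (hS : ∀ l, a l = b l → a l ∉ S) :
    (S.filter (fun x => p ≤ x ∧ x < q)).card + s ≤ n := by
  -- The position chosen from a pair: its row if that precedes the block, else its column.
  let f : Fin s → ℕ := fun l => if a l < p then a l else b l
  have hf : Function.Injective f := by
    intro l m h
    have h1 := hab l
    have h2 := hab m
    simp only [f] at h
    split_ifs at h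
    · exact hainj h
    · omega
    · omega
    · exact hbinj h
  have hdisj : Disjoint (S.filter (fun x => p ≤ x ∧ x < q)) (Finset.univ.image f) := by
    rw [Finset.disjoint_left]
    intro x hx hx'
    obtain ⟨l, -, rfl⟩ := Finset.mem_image.1 hx'
    obtain ⟨hxS, hx1, hx2⟩ := Finset.mem_filter.1 hx
    simp only [f] at hxS hx1 hx2
    split_ifs at hxS hx1 hx2
    · omega
    · have h := hblock l (by omega) hx2
      exact hS l h (h ▸ hxS)
  have hsub : S.filter (fun x => p ≤ x ∧ x < q) ∪ Finset.univ.image f ⊆ Finset.range n := by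
    intro x hx
    rw [Finset.mem_range]
    rcases Finset.mem_union.1 hx with hx | hx
    · have := (Finset.mem_filter.1 hx).2
      omega
    · obtain ⟨l, -, rfl⟩ := Finset.mem_image.1 hx
      simp only [f]
      split_ifs
      · exact han l
      · exact hbn l
  have h := Finset.card_le_card hsub
  rw [Finset.card_union_of_disjoint hdisj, Finset.card_image_of_injective _ hf] at h
  simpa using h

/-- Let `ν` be a composition of `n` (positions `0, …, n-1` grouped into consecutive blocks),
`λ` the conjugate of its weakly decreasing rearrangement, and `1 ≤ s ≤ n - 1`. Given `s`
pairs `(a l, b l)` of positions with the `a l` pairwise distinct, the `b l` pairwise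
distinct, and each pair either diagonal (`a l = b l`) or a possibly nonzero position of the
block strictly upper triangular matrices (`a l < b l` in different blocks), the number of
nondiagonal pairs is at most `d_{λ,s}`. -/
theorem card_offdiagonal_le_dPart (n t : ℕ) (ν : ℕ → ℕ) (hν : ∀ u < t, 0 < ν u)
    (hsum : ∑ u ∈ Finset.range t, ν u = n) (s : ℕ) (hs1 : 1 ≤ s) (hsn : s < n)
    (a b : Fin s → ℕ) (han : ∀ l, a l < n) (hbn : ∀ l, b l < n)
    (hainj : Function.Injective a) (hbinj : Function.Injective b)
    (hcond : ∀ l, a l = b l ∨ (a l < b l ∧ ¬ SameBlock ν t (a l) (b l))) :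
    (Finset.univ.filter (fun l => a l ≠ b l)).card ≤ dPart n (conjOf ν t) s := by
  have hab : ∀ l, a l ≤ b l := fun l => by
    rcases hcond l with h | h
    · exact h.le
    · exact h.1.le
  set D : Finset ℕ := (Finset.univ.filter (fun l => a l = b l)).image a with hD
  have hDcard : D.card + (Finset.univ.filter (fun l => a l ≠ b l)).card = s := by
    rw [hD, Finset.card_image_of_injective _ hainj, Finset.card_filter_add_card_filter_not]
    simp
  have hDsub : D ⊆ Finset.range n := by
    intro x hx
    obtain ⟨l, -, rfl⟩ := Finset.mem_image.1 hx
    exact Finset.mem_range.2 (han l)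
  set S := Finset.range n \ D with hSdef
  have hScard : S.card + D.card = n := by
    rw [hSdef, Finset.card_sdiff_add_card_eq_card hDsub, Finset.card_range]
  have hSblocks := card_filter_lt_eq_sum_blocks ν S t
  rw [hsum, Finset.filter_true_of_mem
    (fun x hx => Finset.mem_range.1 (Finset.mem_sdiff.1 hx).1)] at hSblocks
  have hSle : S.card ≤ ∑ u ∈ Finset.range t, min (ν u) (n - s) := by
    rw [hSblocks]
    refine Finset.sum_le_sum fun u hu => le_min ?_ ?_
    · have hsub : S.filter (fun x => (∑ w ∈ Finset.range u, ν w) ≤ x ∧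
          x < ∑ w ∈ Finset.range (u + 1), ν w) ⊆
          Finset.Ico (∑ w ∈ Finset.range u, ν w) (∑ w ∈ Finset.range (u + 1), ν w) := by
        intro x hx
        exact Finset.mem_Ico.2 (Finset.mem_filter.1 hx).2
      have h := Finset.card_le_card hsub
      rw [Nat.card_Ico, Finset.sum_range_succ, Nat.add_sub_cancel_left] at h
      rwa [Finset.sum_range_succ]
    · have hut := Finset.mem_range.1 hu
      have hq : ∑ w ∈ Finset.range (u + 1), ν w ≤ n := by
        rw [← hsum]
        exact Finset.sum_le_sum_of_subset (Finset.range_mono hut)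
      have h := card_block_sdiff_add_le (p := ∑ w ∈ Finset.range u, ν w) hq a b han hbn
        hainj hbinj hab
        (fun l hp hlt => (hcond l).resolve_right fun h => h.2
          ⟨u, hut, hp, (hab l).trans_lt hlt, hp.trans (hab l), hlt⟩) S
        (fun l hl hmem => (Finset.mem_sdiff.1 hmem).2
          (Finset.mem_image.2 ⟨l, by simpa using hl, rfl⟩))
      omega
  rw [← sum_conjOf] at hSle
  have htot : ∑ j ∈ Finset.range n, conjOf ν t j = n := by
    rw [sum_conjOf]
    refine Eq.trans (Finset.sum_congr rfl fun u hu => min_eq_left ?_) hsum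
    rw [← hsum]
    exact Finset.single_le_sum (f := ν) (fun _ _ => Nat.zero_le _) hu
  have hsplit := Finset.sum_range_add_sum_Ico (conjOf ν t) (Nat.sub_le n s)
  unfold dPart
  omega
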